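/- Let (Ω, μ) be a probability space, let E and F be real normed vector spaces, let g : E → F be Lipschitz with constant C₀ ≥ 0, and let K, N, d be positive natural numbers with E = Fin N → ℝ^d. Let x : Ω → F, z : Ω → Fin N → ℝ^d, y : Ω → Fin N → Fin K be random variables on a finite probability space, m : Fin K → ℝ^d a codebook, and P : Fin K → Fin K → ℝ≥0 a transition kernel with rows summing to 1. Let the received indices ŷ be conditionally independent across positions given ω, with ŷ_n distributed according to P(y_n(ω), ·), and set x̂ = g(m ∘ ŷ). Then E[‖x - x̂‖²] ≤ 2·E_ω[‖x(ω) - g(z(ω))‖²] + 2·C₀²·E_ω[ ∑_{n=1}^{N} ∑_{k=1}^{K} P(y_n(ω), k) · ‖z_n(ω) - m_k‖² ]. -/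

import Mathlib

/-!
By the triangle inequality, `‖a + b‖² ≤ 2‖a‖² + 2‖b‖²` and the Lipschitz property of the decoder,
for each `ω` and each received index vector `yq` the squared loss is at most
`2 ‖x - g z‖² + 2 C₀² ∑ n, ‖z n - m (yq n)‖²`, since the norm on `PiLp 2` is the Frobenius norm.
It remains to average over `yq` under the product law: this law has total mass one
(`sum_prod_eq_one`), and each summand depends on a single coordinate of `yq`, so only the
corresponding marginal of the product law matters (`sum_prod_mul_apply`).
-/

open Finset

/-- The product of finitely many probability vectors is a probability vector. -/
lemma sum_prod_eq_one {N K : ℕ} (p : Fin N → Fin K → ℝ) (hp : ∀ i, ∑ k, p i k = 1) :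
    ∑ q : Fin N → Fin K, ∏ i, p i (q i) = 1 := by
  rw [← Fintype.prod_sum]
  simp [hp]

/-- The `n`-th marginal of a product of probability vectors is its `n`-th factor. -/
lemma sum_prod_mul_apply {N K : ℕ} (p : Fin N → Fin K → ℝ) (hp : ∀ i, ∑ k, p i k = 1)
    (n : Fin N) (f : Fin K → ℝ) :
    ∑ q : Fin N → Fin K, (∏ i, p i (q i)) * f (q n) = ∑ k, p n k * f k := by
  -- Absorbing `f` into the `n`-th factor turns the summand into a pure product.
  have h : ∀ q : Fin N → Fin K, (∏ i, p i (q i)) * f (q n)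
      = ∏ i, (p i (q i) * if i = n then f (q i) else 1) := by
    intro q
    rw [Finset.prod_mul_distrib]
    simp
  simp_rw [h]
  rw [← Fintype.prod_sum (fun i k => p i k * if i = n then f k else 1),
    Finset.prod_eq_single n]
  · simp
  · intro i _ hi
    simp [hi, hp]
  · simp

/-- Combination of Theorem 1 and Proposition 1: on a finite probability space, with a
Lipschitz decoder `g` on `E = Fin N → ℝ^d` (with the Frobenius norm, i.e. `PiLp 2` over
Euclidean spaces), nearest-codeword indices `y`, codebook `m`, index-level transition
kernel `P`, and received indices `yq` conditionally independent across positions with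
`yq n ∼ P (y ω n, ·)`, the end-to-end loss `E[‖x - g (m ∘ yq)‖²]` is bounded by
`2 E[‖x - g z‖²] + 2 C₀² E[∑ n, ∑ k, P (y ω n) k * ‖z ω n - m k‖²]`. -/
theorem stmt_9 (K N d : ℕ) (hK : 0 < K) (hN : 0 < N) (hd : 0 < d)
    {Ω : Type*} [Fintype Ω] (μ : Ω → NNReal) (hμ : ∑ ω, μ ω = 1)
    {F : Type*} [NormedAddCommGroup F] [NormedSpace ℝ F]
    (g : PiLp 2 (fun _ : Fin N => EuclideanSpace ℝ (Fin d)) → F)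
    (C₀ : ℝ) (hC₀ : 0 ≤ C₀)
    (hg : ∀ u v : PiLp 2 (fun _ : Fin N => EuclideanSpace ℝ (Fin d)),
      ‖g u - g v‖ ≤ C₀ * ‖u - v‖)
    (x : Ω → F) (z : Ω → PiLp 2 (fun _ : Fin N => EuclideanSpace ℝ (Fin d)))
    (y : Ω → Fin N → Fin K)
    (m : Fin K → EuclideanSpace ℝ (Fin d))
    (P : Fin K → Fin K → NNReal) (hP : ∀ j, ∑ k, P j k = 1) :
    ∑ ω, ∑ yq : Fin N → Fin K,
        ((μ ω : ℝ) * ∏ n, (P (y ω n) (yq n) : ℝ)) *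
          ‖x ω - g ((WithLp.equiv 2 _).symm fun n => m (yq n))‖ ^ 2
      ≤ 2 * ∑ ω, (μ ω : ℝ) * ‖x ω - g (z ω)‖ ^ 2
        + 2 * C₀ ^ 2 * ∑ ω, (μ ω : ℝ) * ∑ n, ∑ k, (P (y ω n) k : ℝ) * ‖z ω n - m k‖ ^ 2 := by
  have hP' : ∀ j, ∑ k, (P j k : ℝ) = 1 := fun j => by exact_mod_cast hP j
  have pointwise : ∀ ω (q : Fin N → Fin K),
      ‖x ω - g ((WithLp.equiv 2 _).symm fun n => m (q n))‖ ^ 2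
        ≤ 2 * ‖x ω - g (z ω)‖ ^ 2 + 2 * C₀ ^ 2 * ∑ n, ‖z ω n - m (q n)‖ ^ 2 := by
    intro ω q
    set w : PiLp 2 (fun _ : Fin N => EuclideanSpace ℝ (Fin d)) :=
      (WithLp.equiv 2 _).symm fun n => m (q n) with hw
    have frob : ‖z ω - w‖ ^ 2 = ∑ n, ‖z ω n - m (q n)‖ ^ 2 := by
      rw [PiLp.norm_sq_eq_of_L2]
      rfl
    have tri : ‖x ω - g w‖ ≤ ‖x ω - g (z ω)‖ + C₀ * ‖z ω - w‖ :=
      (norm_sub_le_norm_sub_add_norm_sub _ (g (z ω)) _).trans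
        (add_le_add_right (hg _ _) _)
    calc ‖x ω - g w‖ ^ 2 ≤ (‖x ω - g (z ω)‖ + C₀ * ‖z ω - w‖) ^ 2 :=
          pow_le_pow_left₀ (norm_nonneg _) tri 2
      _ ≤ 2 * (‖x ω - g (z ω)‖ ^ 2 + (C₀ * ‖z ω - w‖) ^ 2) := add_sq_le
      _ = _ := by rw [← frob]; ring
  rw [Finset.mul_sum, Finset.mul_sum, ← Finset.sum_add_distrib]
  refine Finset.sum_le_sum fun ω _ => ?_
  have mass := sum_prod_eq_one (fun n k => (P (y ω n) k : ℝ)) fun n => hP' _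
  have marg : ∑ q : Fin N → Fin K, (∏ n, (P (y ω n) (q n) : ℝ)) * ∑ n, ‖z ω n - m (q n)‖ ^ 2
      = ∑ n, ∑ k, (P (y ω n) k : ℝ) * ‖z ω n - m k‖ ^ 2 := by
    simp_rw [Finset.mul_sum]
    rw [Finset.sum_comm]
    exact Finset.sum_congr rfl fun n _ =>
      sum_prod_mul_apply (fun n k => (P (y ω n) k : ℝ)) (fun n => hP' _) n
        fun k => ‖z ω n - m k‖ ^ 2
  calc _ ≤ ∑ q : Fin N → Fin K, ((μ ω : ℝ) * ∏ n, (P (y ω n) (q n) : ℝ)) *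
          (2 * ‖x ω - g (z ω)‖ ^ 2 + 2 * C₀ ^ 2 * ∑ n, ‖z ω n - m (q n)‖ ^ 2) :=
        Finset.sum_le_sum fun q _ => mul_le_mul_of_nonneg_left (pointwise ω q) (by positivity)
    _ = 2 * (μ ω : ℝ) * ‖x ω - g (z ω)‖ ^ 2 * (∑ q : Fin N → Fin K, ∏ n, (P (y ω n) (q n) : ℝ))
        + 2 * C₀ ^ 2 * (μ ω : ℝ) * ∑ q : Fin N → Fin K,
          (∏ n, (P (y ω n) (q n) : ℝ)) * ∑ n, ‖z ω n - m (q n)‖ ^ 2 := by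
        rw [Finset.mul_sum, Finset.mul_sum, ← Finset.sum_add_distrib]
        exact Finset.sum_congr rfl fun q _ => by ring
    _ = _ := by rw [mass, marg]; ring
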